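/- Let K be an (n_I + n_Γ) × (n_I + n_Γ) real matrix written in block form K = [[K_II, K_IΓ], [K_ΓI, K_ΓΓ]] with K_II invertible, let S = K_ΓΓ − K_ΓI K_II⁻¹ K_IΓ be invertible, and let P = [[K_II, K_IΓ], [0, S]]. Then (K P⁻¹ − I)² = 0, i.e. the right-preconditioned matrix K P⁻¹ is unipotent of index at most 2. -/

import Mathlib

open Matrix

section BlockMatrix

variable {l m n R : Type*}

theorem fromBlocks_one_zero_one_sub_one [DecidableEq l] [DecidableEq m] [AddGroupWithOne R]
    (C : Matrix l m R) :
    (fromBlocks 1 0 C 1 - 1 : Matrix (m ⊕ l) (m ⊕ l) R) = fromBlocks 0 0 C 0 := by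
  rw [sub_eq_iff_eq_add, ← fromBlocks_one, fromBlocks_add]
  simp only [zero_add, add_zero]

theorem fromBlocks_zero_zero_zero_mul_self [Fintype l] [Fintype m] [NonUnitalNonAssocSemiring R]
    (C : Matrix l m R) :
    (fromBlocks 0 0 C 0 * fromBlocks 0 0 C 0 : Matrix (m ⊕ l) (m ⊕ l) R) = 0 := by
  simp [fromBlocks_multiply]

variable [Fintype l] [DecidableEq l] [Fintype m] [DecidableEq m]

theorem fromBlocks_one_zero_one_sub_one_sq [Ring R] (C : Matrix l m R) :
    (fromBlocks 1 0 C 1 - 1 : Matrix (m ⊕ l) (m ⊕ l) R) ^ 2 = 0 := by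
  rw [fromBlocks_one_zero_one_sub_one, sq, fromBlocks_zero_zero_zero_mul_self]

variable [CommRing R] {A : Matrix m m R}

theorem fromBlocks_eq_lower_mul_upper_schur (hA : IsUnit A) (B : Matrix m n R)
    (C : Matrix l m R) (D : Matrix l n R) :
    fromBlocks A B C D =
      (fromBlocks 1 0 (C * A⁻¹) 1 : Matrix (m ⊕ l) (m ⊕ l) R) *
        fromBlocks A B 0 (D - C * A⁻¹ * B) := by
  have hCA : C * A⁻¹ * A = C :=
    nonsing_inv_mul_cancel_right A C ((isUnit_iff_isUnit_det A).1 hA)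
  simp [fromBlocks_multiply, hCA]

theorem fromBlocks_mul_inv_upper_schur (hA : IsUnit A) (B : Matrix m l R) (C : Matrix l m R)
    (D : Matrix l l R) (hS : IsUnit (D - C * A⁻¹ * B)) :
    fromBlocks A B C D * (fromBlocks A B 0 (D - C * A⁻¹ * B))⁻¹ =
      fromBlocks 1 0 (C * A⁻¹) 1 := by
  have hP : IsUnit (fromBlocks A B 0 (D - C * A⁻¹ * B)) :=
    isUnit_fromBlocks_zero₂₁.2 ⟨hA, hS⟩
  rw [fromBlocks_eq_lower_mul_upper_schur hA B C D,
    mul_nonsing_inv_cancel_right _ _ ((isUnit_iff_isUnit_det _).1 hP)]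

theorem schur_preconditioned_unipotent_general (hA : IsUnit A) (B : Matrix m l R)
    (C : Matrix l m R) (D : Matrix l l R) (hS : IsUnit (D - C * A⁻¹ * B)) :
    (fromBlocks A B C D * (fromBlocks A B 0 (D - C * A⁻¹ * B))⁻¹ - 1) ^ 2 = 0 := by
  rw [fromBlocks_mul_inv_upper_schur hA B C D hS, fromBlocks_one_zero_one_sub_one_sq]

end BlockMatrix

/-- With the Schur-complement block upper-triangular preconditioner `P`,
the right-preconditioned matrix `K * P⁻¹` satisfies `(K P⁻¹ − I)² = 0`,
i.e. it is unipotent of index at most 2. -/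
theorem schur_preconditioned_unipotent
    (nI nΓ : ℕ)
    (KII : Matrix (Fin nI) (Fin nI) ℝ) (KIΓ : Matrix (Fin nI) (Fin nΓ) ℝ)
    (KΓI : Matrix (Fin nΓ) (Fin nI) ℝ) (KΓΓ : Matrix (Fin nΓ) (Fin nΓ) ℝ)
    (hKII : IsUnit KII)
    (S : Matrix (Fin nΓ) (Fin nΓ) ℝ)
    (hS : S = KΓΓ - KΓI * KII⁻¹ * KIΓ)
    (hSu : IsUnit S)
    (K : Matrix (Fin nI ⊕ Fin nΓ) (Fin nI ⊕ Fin nΓ) ℝ)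
    (hK : K = fromBlocks KII KIΓ KΓI KΓΓ)
    (P : Matrix (Fin nI ⊕ Fin nΓ) (Fin nI ⊕ Fin nΓ) ℝ)
    (hP : P = fromBlocks KII KIΓ 0 S) :
    (K * P⁻¹ - 1) ^ 2 = 0 := by
  subst hS hK hP
  exact schur_preconditioned_unipotent_general hKII KIΓ KΓI KΓΓ hSu
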